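/- arXiv:1009.4893 — 2 statements merged into one kernel-verified Lean document; each statement's English description precedes it below -/
import Mathlib

section
/- For every x in the group algebra Λπ, x·T = 0 if and only if x = y·N for some y ∈ Λπ; that is, the annihilator of T in Λπ is the principal ideal generated by N. (This is the exactness of the canonical complex W at the even-degree terms.) -/
/-!
For an element `g` of finite order `n`, put `T = g - 1` and `N = 1 + g + ⋯ + g ^ (n - 1)`. The
product `N * T` telescopes to `g ^ n - 1 = 0`, so every multiple of `N` is killed by `T`.
Conversely, `x * T = 0` says `x * g = x`, so the coefficients of `x` are constant on the left
cosets of `⟨g⟩`. If `y` is the restriction of `x` to a set of coset representatives, multiplying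
`y` by `N`, the sum of the elements of `⟨g⟩`, spreads each coefficient over its coset and gives
back `x`.
-/

open MonoidAlgebra

lemma sum_zpowers_eq_sum_range_orderOf {G M : Type*} [Group G] [AddCommMonoid M] {g : G}
    [Fintype (Subgroup.zpowers g)] (hg : IsOfFinOrder g) (f : G → M) :
    ∑ k : Subgroup.zpowers g, f k = ∑ j ∈ Finset.range (orderOf g), f (g ^ j) := by
  rw [← (finEquivZPowers hg).sum_comp, Finset.sum_range]
  simp only [finEquivZPowers_apply]

section Semiring

variable {R G : Type*} [Semiring R] [Group G]

lemma coeff_mul_inv_of_mul_of_eq_self {x : MonoidAlgebra R G} {k : G}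
    (hx : x * of R G k = x) (h : G) : x.coeff (h * k⁻¹) = x.coeff h := by
  conv_rhs => rw [← hx, of_apply, coeff_mul_single_apply, mul_one]

lemma coeff_mul_sum_of {ι : Type*} (s : Finset ι) (f : ι → G) (y : MonoidAlgebra R G) (h : G) :
    (y * ∑ i ∈ s, of R G (f i)).coeff h = ∑ i ∈ s, y.coeff (h * (f i)⁻¹) := by
  simp only [Finset.mul_sum, coeff_sum, Finsupp.finsetSum_apply, of_apply,
    coeff_mul_single_apply, mul_one]

lemma exists_eq_mul_sum_subgroup (H : Subgroup G) [Fintype H] {x : MonoidAlgebra R G}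
    (hx : ∀ k ∈ H, x * of R G k = x) : ∃ y, x = y * ∑ k : H, of R G k := by
  classical
  obtain ⟨S, hS, -⟩ := H.exists_isComplement_left 1
  refine ⟨ofCoeff (x.coeff.filter (· ∈ S)), ?_⟩
  ext h
  obtain ⟨k, hk, hk_unique⟩ := Subgroup.isComplement_iff_existsUnique_mul_inv_mem.1 hS h
  have h_vanish (l : H) (hl : l ≠ k) : x.coeff.filter (· ∈ S) (h * (l : G)⁻¹) = 0 :=
    Finsupp.filter_apply_neg _ _ fun hlS ↦ hl (hk_unique l hlS)
  calc x.coeff h = x.coeff (h * (k : G)⁻¹) :=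
        (coeff_mul_inv_of_mul_of_eq_self (hx k k.2) h).symm
    _ = x.coeff.filter (· ∈ S) (h * (k : G)⁻¹) := (Finsupp.filter_apply_pos _ _ hk).symm
    _ = ∑ l : H, x.coeff.filter (· ∈ S) (h * (l : G)⁻¹) :=
        (Fintype.sum_eq_single k h_vanish).symm
    _ = _ := (coeff_mul_sum_of _ _ (ofCoeff (x.coeff.filter (· ∈ S))) h).symm

end Semiring

lemma sum_range_orderOf_mul_of_sub_one {R M : Type*} [Ring R] [Monoid M] (a : M) :
    (∑ j ∈ Finset.range (orderOf a), of R M (a ^ j)) * (of R M a - 1) = 0 := by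
  simp only [map_pow]
  rw [geom_sum_mul, ← map_pow, pow_orderOf_eq_one, map_one, sub_self]

theorem stmt3_general {R G : Type*} [Ring R] [Group G] {g : G} {n : ℕ} (hn : 0 < n)
    (hgn : orderOf g = n) (x : MonoidAlgebra R G) :
    x * (of R G g - 1) = 0 ↔ ∃ y, x = y * ∑ j ∈ Finset.range n, of R G g ^ j := by
  subst hgn
  have hg : IsOfFinOrder g := orderOf_pos_iff.1 hn
  simp only [← map_pow]
  constructor
  · intro hx
    have hxg : x * of R G g = x := by rwa [mul_sub_one, sub_eq_zero] at hx
    have : Finite (Subgroup.zpowers g) := hg.finite_zpowers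
    have := Fintype.ofFinite (Subgroup.zpowers g)
    rw [← sum_zpowers_eq_sum_range_orderOf hg]
    refine exists_eq_mul_sum_subgroup _ fun k hk ↦ ?_
    obtain ⟨m, rfl⟩ := hg.mem_powers_iff_mem_zpowers.2 hk
    simpa only [map_pow, mul_right_iterate] using
      Function.iterate_fixed (f := (· * of R G g)) hxg m
  · rintro ⟨y, rfl⟩
    rw [mul_assoc, sum_range_orderOf_mul_of_sub_one, mul_zero]

/-- In the group algebra `Λπ` of the cyclic group `π` of order `p` (with generator `α`)
over `Λ = ℤ/p`, with `T = α - 1` and `N = 1 + α + ⋯ + α^(p-1)`: for every `x`,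
`x * T = 0` iff `x = y * N` for some `y`; i.e. the annihilator of `T` is the
principal ideal generated by `N`. -/
theorem stmt3 (p : ℕ) (hp : p.Prime)
    (α : MonoidAlgebra (ZMod p) (Multiplicative (ZMod p)))
    (hα : α = MonoidAlgebra.of (ZMod p) (Multiplicative (ZMod p))
      (Multiplicative.ofAdd (1 : ZMod p)))
    (T N : MonoidAlgebra (ZMod p) (Multiplicative (ZMod p)))
    (hT : T = α - 1) (hN : N = ∑ j ∈ Finset.range p, α ^ j) :
    ∀ x : MonoidAlgebra (ZMod p) (Multiplicative (ZMod p)),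
      x * T = 0 ↔ ∃ y, x = y * N := by
  subst hα hT hN
  exact stmt3_general hp.pos ((orderOf_ofAdd_eq_addOrderOf 1).trans (ZMod.addOrderOf_one p))
end

section
/- The coproduct ψ is a chain map: for all n ≥ 1, d_{W⊗W} ∘ ψ_n = ψ_{n−1} ∘ d_W, where d_{W⊗W}(x ⊗ y) = dx ⊗ y + (−1)^i x ⊗ dy for x ∈ W_i. -/
/-!
In the commutative ring `Λπ ⊗ Λπ` put `x = α ⊗ 1`, `y = 1 ⊗ α`, `N_z = ∑_{j < p} z ^ j` and
`S = ∑_{r < s < p} x ^ r y ^ s`. According to the parities of the bidegree `(a, b)` of a component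
of `d (ψ e_{a + b + 1})`, the chain map property reads

* `(x - 1) y + (y - 1) = x y - 1` for `a`, `b` even;
* `(x - 1) S + N_y = N_{xy}` for `a` even, `b` odd;
* `N_x - (y - 1) S = N_{xy} y` for `a` odd, `b` even;
* `N_x - N_y y = (x y - 1) S` for `a`, `b` odd.

The products of `S` with `x - 1` and `y - 1` are telescoping sums, and the last identity follows
from the two before it by `x y - 1 = x (y - 1) + (x - 1)`, because `z N_z = N_z` whenever
`z ^ p = 1`.
-/

open TensorProduct

namespace Stmt8

variable (p : ℕ)

/-- The group algebra `Λπ` of the cyclic group `π = ℤ/p` over `Λ = ℤ/p`. -/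
abbrev GA := MonoidAlgebra (ZMod p) (Multiplicative (ZMod p))

/-- `R = Λπ ⊗_Λ Λπ`, the degreewise building block of `W ⊗ W`:  the component of
`(W ⊗ W)_n` in bidegree `(a, n - a)` is `W_a ⊗_Λ W_{n-a} ≅ Λπ ⊗_Λ Λπ` via the basis
`(e_a, e_{n-a})`. -/
abbrev R := TensorProduct (ZMod p) (GA p) (GA p)

/-- `A = α ⊗ 1`, the generator acting on the left tensor factor. -/
noncomputable def A : R p :=
  (MonoidAlgebra.of (ZMod p) (Multiplicative (ZMod p)) (Multiplicative.ofAdd (1 : ZMod p))) ⊗ₜ 1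

/-- `B = 1 ⊗ α`, the generator acting on the right tensor factor. -/
noncomputable def B : R p :=
  1 ⊗ₜ (MonoidAlgebra.of (ZMod p) (Multiplicative (ZMod p)) (Multiplicative.ofAdd (1 : ZMod p)))

/-- The differential coefficient acting on the left tensor factor:
`T ⊗ 1 = A - 1` in odd degrees, `N ⊗ 1 = Σ_j A^j` in even degrees. -/
noncomputable def cL (m : ℕ) : R p :=
  if Odd m then A p - 1 else ∑ j ∈ Finset.range p, (A p) ^ j

/-- The differential coefficient acting on the right tensor factor:
`1 ⊗ T = B - 1` in odd degrees, `1 ⊗ N = Σ_j B^j` in even degrees. -/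
noncomputable def cR (m : ℕ) : R p :=
  if Odd m then B p - 1 else ∑ j ∈ Finset.range p, (B p) ^ j

/-- The diagonal image of the differential coefficient of `W` in degree `n`
(`α` acts diagonally on `W ⊗ W`, i.e. as `A * B = α ⊗ α`): `Δ(T) = A*B - 1` in odd
degrees and `Δ(N) = Σ_j (A*B)^j` in even degrees. -/
noncomputable def cD (n : ℕ) : R p :=
  if Odd n then A p * B p - 1 else ∑ j ∈ Finset.range p, (A p * B p) ^ j

/-- The component of `ψ(e_n)` lying in `W_a ⊗ W_{n-a}`, written in the basis
`(e_a, e_{n-a})`: from `ψ(e_{2i+1}) = Σ_{j+k=i} e_{2j} ⊗ e_{2k+1} + Σ_{j+k=i} e_{2j+1} ⊗ α e_{2k}`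
and `ψ(e_{2i}) = Σ_{j+k=i} e_{2j} ⊗ e_{2k} + Σ_{j+k=i-1} Σ_{0 ≤ r < s < p} α^r e_{2j+1} ⊗ α^s e_{2k+1}`,
the component is `1 ⊗ 1` if `a` is even, `1 ⊗ α = B` if `a` is odd and `n` is odd, and
`Σ_{0 ≤ r < s < p} α^r ⊗ α^s = Σ_{r<s<p} A^r B^s` if `a` is odd and `n` is even. -/
noncomputable def Ψ (n a : ℕ) : R p :=
  if Even a then 1
  else if Even n then ∑ s ∈ Finset.range p, ∑ r ∈ Finset.range s, (A p) ^ r * (B p) ^ s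
  else B p

section CommRing

variable {K : Type*} [CommRing K] (x y : K) (q : ℕ)

/-- The sum `∑_{0 ≤ r < s < q} x ^ r y ^ s`, whose value at `x = α ⊗ 1`, `y = 1 ⊗ α` is the
coefficient of `e_{2j+1} ⊗ e_{2k+1}` in the coproduct. -/
def strictPairSum : K :=
  ∑ s ∈ Finset.range q, ∑ r ∈ Finset.range s, x ^ r * y ^ s

/-- The coefficient of the `n`-th differential of the periodic resolution of the cyclic group of
order `q`, with an element `x` of a commutative ring in place of the generator. There is no
differential in degree `0`, where the value is that of the positive even degrees. -/
def periodicDifferential (n : ℕ) : K :=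
  if Odd n then x - 1 else ∑ j ∈ Finset.range q, x ^ j

/-- The coefficient of the bidegree `(a, n - a)` component of the coproduct in degree `n`, with
elements `x` and `y` of a commutative ring in place of `α ⊗ 1` and `1 ⊗ α`. -/
def coproductCoeff (n a : ℕ) : K :=
  if Even a then 1 else if Even n then strictPairSum x y q else y

variable {n a : ℕ}

theorem periodicDifferential_of_odd (hn : Odd n) : periodicDifferential x q n = x - 1 :=
  if_pos hn

theorem periodicDifferential_of_even (hn : Even n) :
    periodicDifferential x q n = ∑ j ∈ Finset.range q, x ^ j :=
  if_neg (Nat.not_odd_iff_even.mpr hn)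

theorem coproductCoeff_of_even (ha : Even a) : coproductCoeff x y q n a = 1 :=
  if_pos ha

theorem coproductCoeff_of_even_of_odd (hn : Even n) (ha : Odd a) :
    coproductCoeff x y q n a = strictPairSum x y q := by
  rw [coproductCoeff, if_neg (Nat.not_even_iff_odd.mpr ha), if_pos hn]

theorem coproductCoeff_of_odd_of_odd (hn : Odd n) (ha : Odd a) :
    coproductCoeff x y q n a = y := by
  rw [coproductCoeff, if_neg (Nat.not_even_iff_odd.mpr ha), if_neg (Nat.not_even_iff_odd.mpr hn)]

theorem strictPairSum_succ :
    strictPairSum x y (q + 1) = strictPairSum x y q + (∑ r ∈ Finset.range q, x ^ r) * y ^ q := by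
  rw [strictPairSum, Finset.sum_range_succ, ← Finset.sum_mul, strictPairSum]

theorem sub_one_mul_strictPairSum_left :
    (x - 1) * strictPairSum x y q
      = ∑ j ∈ Finset.range q, (x * y) ^ j - ∑ j ∈ Finset.range q, y ^ j := by
  induction q with
  | zero => simp [strictPairSum]
  | succ q ih =>
    simp only [strictPairSum_succ, Finset.sum_range_succ]
    linear_combination ih + y ^ q * mul_geom_sum x q

theorem sub_one_mul_strictPairSum_right :
    (y - 1) * strictPairSum x y q
      = y ^ q * ∑ j ∈ Finset.range q, x ^ j - y * ∑ j ∈ Finset.range q, (x * y) ^ j := by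
  induction q with
  | zero => simp [strictPairSum]
  | succ q ih =>
    simp only [strictPairSum_succ, Finset.sum_range_succ]
    linear_combination ih

variable {x y q}

theorem mul_geom_sum_of_pow_eq_one (hx : x ^ q = 1) :
    x * ∑ j ∈ Finset.range q, x ^ j = ∑ j ∈ Finset.range q, x ^ j := by
  linear_combination mul_geom_sum x q + hx

theorem mul_sub_one_mul_strictPairSum (hx : x ^ q = 1) (hy : y ^ q = 1) :
    (x * y - 1) * strictPairSum x y q
      = ∑ j ∈ Finset.range q, x ^ j - ∑ j ∈ Finset.range q, y ^ j := by
  have hxy : (x * y) ^ q = 1 := by rw [mul_pow, hx, hy, one_mul]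
  calc (x * y - 1) * strictPairSum x y q
      = x * ((y - 1) * strictPairSum x y q) + (x - 1) * strictPairSum x y q := by ring
    _ = x * ∑ j ∈ Finset.range q, x ^ j - x * y * ∑ j ∈ Finset.range q, (x * y) ^ j
          + (∑ j ∈ Finset.range q, (x * y) ^ j - ∑ j ∈ Finset.range q, y ^ j) := by
      rw [sub_one_mul_strictPairSum_left, sub_one_mul_strictPairSum_right, hy]
      ring
    _ = ∑ j ∈ Finset.range q, x ^ j - ∑ j ∈ Finset.range q, y ^ j := by
      rw [mul_geom_sum_of_pow_eq_one hx, mul_geom_sum_of_pow_eq_one hxy]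
      ring

theorem stmt8_general (hx : x ^ q = 1) (hy : y ^ q = 1) (a b : ℕ) :
    periodicDifferential x q (a + 1) * coproductCoeff x y q (a + b + 1) (a + 1)
        + (-1) ^ a * (periodicDifferential y q (b + 1) * coproductCoeff x y q (a + b + 1) a)
      = periodicDifferential (x * y) q (a + b + 1) * coproductCoeff x y q (a + b) a := by
  rcases Nat.even_or_odd a with ha | ha <;> rcases Nat.even_or_odd b with hb | hb
  · have hab := ha.add hb
    rw [ha.neg_one_pow, periodicDifferential_of_odd _ _ ha.add_one,
      periodicDifferential_of_odd _ _ hb.add_one, periodicDifferential_of_odd _ _ hab.add_one,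
      coproductCoeff_of_odd_of_odd _ _ _ hab.add_one ha.add_one,
      coproductCoeff_of_even _ _ _ ha, coproductCoeff_of_even _ _ _ ha]
    ring
  · have hab := ha.add_odd hb
    rw [ha.neg_one_pow, periodicDifferential_of_odd _ _ ha.add_one,
      periodicDifferential_of_even _ _ hb.add_one, periodicDifferential_of_even _ _ hab.add_one,
      coproductCoeff_of_even_of_odd _ _ _ hab.add_one ha.add_one,
      coproductCoeff_of_even _ _ _ ha, coproductCoeff_of_even _ _ _ ha]
    linear_combination sub_one_mul_strictPairSum_left x y q
  · have hab := ha.add_even hb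
    rw [ha.neg_one_pow, periodicDifferential_of_even _ _ ha.add_one,
      periodicDifferential_of_odd _ _ hb.add_one, periodicDifferential_of_even _ _ hab.add_one,
      coproductCoeff_of_even _ _ _ ha.add_one, coproductCoeff_of_even_of_odd _ _ _ hab.add_one ha,
      coproductCoeff_of_odd_of_odd _ _ _ hab ha, sub_one_mul_strictPairSum_right, hy]
    ring
  · have hab := ha.add_odd hb
    rw [ha.neg_one_pow, periodicDifferential_of_even _ _ ha.add_one,
      periodicDifferential_of_even _ _ hb.add_one, periodicDifferential_of_odd _ _ hab.add_one,
      coproductCoeff_of_even _ _ _ ha.add_one, coproductCoeff_of_odd_of_odd _ _ _ hab.add_one ha,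
      coproductCoeff_of_even_of_odd _ _ _ hab ha, mul_sub_one_mul_strictPairSum hx hy,
      mul_comm _ y, mul_geom_sum_of_pow_eq_one hy]
    ring

end CommRing

theorem of_ofAdd_one_pow_self :
    MonoidAlgebra.of (ZMod p) (Multiplicative (ZMod p)) (Multiplicative.ofAdd 1) ^ p = 1 := by
  rw [← map_pow, ← ofAdd_nsmul, nsmul_one, ZMod.natCast_self, ofAdd_zero, map_one]

theorem A_pow_self : A p ^ p = 1 := by
  rw [A, Algebra.TensorProduct.tmul_pow, of_ofAdd_one_pow_self, one_pow,
    Algebra.TensorProduct.one_def]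

theorem B_pow_self : B p ^ p = 1 := by
  rw [B, Algebra.TensorProduct.tmul_pow, of_ofAdd_one_pow_self, one_pow,
    Algebra.TensorProduct.one_def]

/-- The coproduct `ψ` of the canonical resolution `W` is a chain map:
`d_{W⊗W} ∘ ψ_n = ψ_{n-1} ∘ d_W` for all `n ≥ 1`, where
`d_{W⊗W}(x ⊗ y) = dx ⊗ y + (-1)^i x ⊗ dy` for `x ∈ W_i`.  Expressed on the free
generator `e_n` and in the component of bidegree `(a, n - 1 - a)` (for each `0 ≤ a ≤ n-1`)
this is the identity below in `Λπ ⊗_Λ Λπ`. -/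
theorem stmt8 (hp : p.Prime) (n a : ℕ) (hn : 1 ≤ n) (ha : a ≤ n - 1) :
    cL p (a + 1) * Ψ p n (a + 1) + (-1 : R p) ^ a * (cR p (n - a) * Ψ p n a)
      = cD p n * Ψ p (n - 1) a := by
  obtain ⟨b, rfl⟩ : ∃ b, n = a + b + 1 := ⟨n - 1 - a, by omega⟩
  rw [show a + b + 1 - a = b + 1 by omega]
  exact stmt8_general (A_pow_self p) (B_pow_self p) a b

end Stmt8
end
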